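/- Let d ≥ 2, let A : ℝ^d → ℝ^d be smooth, let R > 0, let D_R be the open ball of radius R centred at the origin, and define μ(R) as the infimum, over all smooth g : ℝ^d → ℂ that are not identically zero on D_R, of the quotient (∫_{D_R} |∇g(x) − iA(x)g(x)|² |x|^{−(d−2)} dx) / (∫_{D_R} |g(x)|² |x|^{−(d−2)} dx). Then for every ψ ∈ C_c^∞(ℝ^d, ℂ) one has ∫_{ℝ^d} |∇ψ(x) − iA(x)ψ(x)|² dx − ((d−2)/2)² ∫_{ℝ^d} |ψ(x)|²/|x|² dx ≥ μ(R) ∫_{D_R} |ψ(x)|² dx. -/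

import Mathlib

open MeasureTheory Real

/-- The magnetic energy density `|∇g(x) − iA(x)g(x)|²`. -/
noncomputable def magEnergy (d : ℕ)
    (A : EuclideanSpace ℝ (Fin d) → EuclideanSpace ℝ (Fin d))
    (g : EuclideanSpace ℝ (Fin d) → ℂ) (x : EuclideanSpace ℝ (Fin d)) : ℝ :=
  ∑ j, ‖fderiv ℝ g x (EuclideanSpace.single j (1:ℝ)) - Complex.I * (A x j : ℝ) * g x‖ ^ 2

/-- The lowest magnetic Neumann-type Rayleigh quotient on the ball of radius `R`
with weight `|x|^{-(d-2)}`. -/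
noncomputable def muB (d : ℕ)
    (A : EuclideanSpace ℝ (Fin d) → EuclideanSpace ℝ (Fin d)) (R : ℝ) : ℝ :=
  sInf {q : ℝ | ∃ g : EuclideanSpace ℝ (Fin d) → ℂ, ContDiff ℝ (⊤ : ℕ∞) g ∧
    (∃ x ∈ Metric.ball (0 : EuclideanSpace ℝ (Fin d)) R, g x ≠ 0) ∧
    q = (∫ x in Metric.ball (0 : EuclideanSpace ℝ (Fin d)) R,
          magEnergy d A g x * ‖x‖ ^ (-((d:ℝ) - 2)))
        / ∫ x in Metric.ball (0 : EuclideanSpace ℝ (Fin d)) R,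
            ‖g x‖^2 * ‖x‖ ^ (-((d:ℝ) - 2))}

open Filter Topology

section NormedSpace

variable {E F : Type*} [NormedAddCommGroup E] [NormedSpace ℝ E] [NormedAddCommGroup F]
  [NormedSpace ℝ F]

/-- A function smooth away from a point and vanishing near that point is smooth. -/
lemma contDiff_of_eventuallyEq_zero {n : WithTop ℕ∞} {f : E → F} {a : E}
    (h0 : f =ᶠ[𝓝 a] 0) (h : ∀ x ≠ a, ContDiffAt ℝ n f x) : ContDiff ℝ n f := by
  rw [contDiff_iff_contDiffAt]
  intro x
  rcases eq_or_ne x a with rfl | hx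
  · exact contDiffAt_const.congr_of_eventuallyEq h0
  · exact h x hx

end NormedSpace

lemma clm_apply_eq_sum {d : ℕ} {F : Type*} [NormedAddCommGroup F] [NormedSpace ℝ F]
    (L : EuclideanSpace ℝ (Fin d) →L[ℝ] F) (x : EuclideanSpace ℝ (Fin d)) :
    L x = ∑ j, x j • L (EuclideanSpace.single j 1) := by
  conv_lhs => rw [← (EuclideanSpace.basisFun (Fin d) ℝ).sum_repr x]
  simp

/-- Euler's identity for the radial derivative of a compactly supported function. -/
lemma integral_fderiv_self_apply {d : ℕ} {h : EuclideanSpace ℝ (Fin d) → ℝ}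
    (hh : ContDiff ℝ 1 h) (hc : HasCompactSupport h) :
    ∫ x, fderiv ℝ h x x = -(d * ∫ x, h x) := by
  have hcont : ∀ j : Fin d, Continuous fun x : EuclideanSpace ℝ (Fin d) =>
      fderiv ℝ h x (EuclideanSpace.single j 1) := fun j =>
    (hh.continuous_fderiv one_ne_zero).clm_apply continuous_const
  have hsuppj : ∀ j : Fin d, HasCompactSupport fun x : EuclideanSpace ℝ (Fin d) =>
      fderiv ℝ h x (EuclideanSpace.single j 1) := fun j => hc.fderiv_apply ℝ _
  have hint : ∀ j : Fin d, Integrable fun x : EuclideanSpace ℝ (Fin d) =>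
      x j * fderiv ℝ h x (EuclideanSpace.single j 1) := fun j =>
    (Continuous.mul (by fun_prop) (hcont j)).integrable_of_hasCompactSupport (hsuppj j).mul_left
  have hparts : ∀ j : Fin d, ∫ x : EuclideanSpace ℝ (Fin d),
      x j * fderiv ℝ h x (EuclideanSpace.single j 1) = -∫ x, h x := by
    intro j
    have hder : ∀ x : EuclideanSpace ℝ (Fin d),
        fderiv ℝ (fun y : EuclideanSpace ℝ (Fin d) => y j) x (EuclideanSpace.single j 1) = 1 := by
      intro x
      have := (EuclideanSpace.proj (𝕜 := ℝ) j : EuclideanSpace ℝ (Fin d) →L[ℝ] ℝ).hasFDerivAt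
        (x := x)
      rw [show (fun y : EuclideanSpace ℝ (Fin d) => y j) =
        ⇑(EuclideanSpace.proj (𝕜 := ℝ) j : EuclideanSpace ℝ (Fin d) →L[ℝ] ℝ) from rfl,
        this.fderiv]
      simp
    rw [integral_mul_fderiv_eq_neg_fderiv_mul_of_integrable _ (hint j)]
    · simp only [hder, one_mul]
    · exact (Continuous.mul (by fun_prop) hh.continuous).integrable_of_hasCompactSupport
        hc.mul_left
    · intro x _
      exact (EuclideanSpace.proj (𝕜 := ℝ) j :
        EuclideanSpace ℝ (Fin d) →L[ℝ] ℝ).differentiableAt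
    · intro x _
      exact (hh.differentiable one_ne_zero) x
    · simp only [hder, one_mul]
      exact hh.continuous.integrable_of_hasCompactSupport hc
  rw [integral_congr_ae (Eventually.of_forall fun x => clm_apply_eq_sum (fderiv ℝ h x) x)]
  simp_rw [smul_eq_mul]
  rw [integral_finsetSum _ fun j _ => hint j]
  simp [hparts]

lemma hasCompactSupport_norm_sq {X F : Type*} [TopologicalSpace X] [NormedAddCommGroup F]
    {f : X → F} (hf : HasCompactSupport f) : HasCompactSupport fun x => ‖f x‖ ^ 2 :=
  hf.mono fun x hx => by
    contrapose! hx
    simp_all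

lemma integrable_norm_sq_div_norm_sq {d : ℕ} (hd : 3 ≤ d) {ψ : EuclideanSpace ℝ (Fin d) → ℂ}
    (hψ : Continuous ψ) (hc : HasCompactSupport ψ) :
    Integrable fun x => ‖ψ x‖ ^ 2 / ‖x‖ ^ 2 := by
  have hloc : LocallyIntegrable (fun x : EuclideanSpace ℝ (Fin d) => (‖x‖ ^ 2)⁻¹) := by
    refine locallyIntegrable_of_norm_le_rpow (C := 1) (α := 2) ?_ ?_ ?_ ?_
    · simp; omega
    · simp; exact_mod_cast hd
    · refine Eventually.of_forall fun x => ?_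
      rw [one_mul, Real.rpow_neg (norm_nonneg _), Real.rpow_two, Real.norm_of_nonneg (by positivity)]
    · exact (Measurable.inv (by fun_prop)).aestronglyMeasurable
  simp_rw [div_eq_mul_inv]
  exact hloc.integrable_smul_left_of_hasCompactSupport (g := fun x => ‖ψ x‖ ^ 2)
    (by fun_prop) (hasCompactSupport_norm_sq hc)

variable {d : ℕ} {A : EuclideanSpace ℝ (Fin d) → EuclideanSpace ℝ (Fin d)}

lemma magEnergy_nonneg (g : EuclideanSpace ℝ (Fin d) → ℂ) (x : EuclideanSpace ℝ (Fin d)) :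
    0 ≤ magEnergy d A g x :=
  Finset.sum_nonneg fun _ _ => by positivity

lemma magEnergy_congr {f g : EuclideanSpace ℝ (Fin d) → ℂ} {x : EuclideanSpace ℝ (Fin d)}
    (h : f =ᶠ[𝓝 x] g) : magEnergy d A f x = magEnergy d A g x := by
  simp only [magEnergy, h.fderiv_eq, h.eq_of_nhds]

lemma magEnergy_eq_zero {g : EuclideanSpace ℝ (Fin d) → ℂ} {x : EuclideanSpace ℝ (Fin d)}
    (h : g =ᶠ[𝓝 x] 0) : magEnergy d A g x = 0 := by
  rw [magEnergy_congr h]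
  simp [magEnergy]

lemma continuous_magEnergy {g : EuclideanSpace ℝ (Fin d) → ℂ} (hA : Continuous A)
    (hg : ContDiff ℝ 1 g) : Continuous (magEnergy d A g) := by
  have h1 := hg.continuous_fderiv one_ne_zero
  have h2 := hg.continuous
  refine continuous_finsetSum _ fun j _ => Continuous.pow (Continuous.norm ?_) 2
  refine (h1.clm_apply continuous_const).sub (Continuous.mul (continuous_const.mul ?_) h2)
  exact Complex.continuous_ofReal.comp ((EuclideanSpace.proj (𝕜 := ℝ) j).continuous.comp hA)

lemma hasCompactSupport_magEnergy {g : EuclideanSpace ℝ (Fin d) → ℂ}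
    (hg : HasCompactSupport g) : HasCompactSupport (magEnergy d A g) :=
  HasCompactSupport.intro hg fun _ hx =>
    magEnergy_eq_zero (notMem_tsupport_iff_eventuallyEq.1 hx)

lemma integrable_magEnergy {g : EuclideanSpace ℝ (Fin d) → ℂ} (hA : Continuous A)
    (hg : ContDiff ℝ 1 g) (hc : HasCompactSupport g) : Integrable (magEnergy d A g) :=
  (continuous_magEnergy hA hg).integrable_of_hasCompactSupport (hasCompactSupport_magEnergy hc)

/-- The Rayleigh quotient bound by `muB`, cleared of denominators. -/
lemma muB_mul_le {R : ℝ} {g : EuclideanSpace ℝ (Fin d) → ℂ} (hg : ContDiff ℝ (⊤ : ℕ∞) g) :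
    muB d A R * ∫ x in Metric.ball (0 : EuclideanSpace ℝ (Fin d)) R,
        ‖g x‖ ^ 2 * ‖x‖ ^ (-((d : ℝ) - 2))
      ≤ ∫ x in Metric.ball (0 : EuclideanSpace ℝ (Fin d)) R,
          magEnergy d A g x * ‖x‖ ^ (-((d : ℝ) - 2)) := by
  have hnum : ∀ f : EuclideanSpace ℝ (Fin d) → ℂ,
      0 ≤ ∫ x in Metric.ball (0 : EuclideanSpace ℝ (Fin d)) R,
        magEnergy d A f x * ‖x‖ ^ (-((d : ℝ) - 2)) := fun f =>
    integral_nonneg fun x => mul_nonneg (magEnergy_nonneg f x) (by positivity)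
  have hden : ∀ f : EuclideanSpace ℝ (Fin d) → ℂ,
      0 ≤ ∫ x in Metric.ball (0 : EuclideanSpace ℝ (Fin d)) R,
        ‖f x‖ ^ 2 * ‖x‖ ^ (-((d : ℝ) - 2)) := fun f =>
    integral_nonneg fun x => by positivity
  rcases (hden g).eq_or_lt with h0 | hpos
  · rw [← h0, mul_zero]
    exact hnum g
  · rw [← le_div_iff₀ hpos]
    refine csInf_le ⟨0, ?_⟩ ⟨g, hg, ?_, rfl⟩
    · rintro _ ⟨f, -, -, rfl⟩
      exact div_nonneg (hnum f) (hden f)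
    · by_contra! hzero
      refine hpos.ne' (setIntegral_eq_zero_of_forall_eq_zero fun x hx => ?_)
      simp [hzero x hx]

/-- The pointwise ground state representation. -/
lemma magEnergy_rpow_smul {φ : EuclideanSpace ℝ (Fin d) → ℂ} {x : EuclideanSpace ℝ (Fin d)}
    (hφ : DifferentiableAt ℝ φ x) (hx : x ≠ 0) (α : ℝ) :
    magEnergy d A (fun y => ‖y‖ ^ α • φ y) x * ‖x‖ ^ (-(2 * α)) =
      magEnergy d A φ x + α * (fderiv ℝ (fun y => ‖φ y‖ ^ 2 / ‖y‖ ^ 2) x x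
        + 2 * (‖φ x‖ ^ 2 / ‖x‖ ^ 2)) + α ^ 2 * (‖φ x‖ ^ 2 / ‖x‖ ^ 2) := by
  have hr : 0 < ‖x‖ := norm_pos_iff.2 hx
  have hsq : HasFDerivAt (fun y : EuclideanSpace ℝ (Fin d) => ‖y‖ ^ 2) (2 • innerSL ℝ x) x :=
    (hasStrictFDerivAt_norm_sq x).hasFDerivAt
  have hpow : HasFDerivAt (fun y : EuclideanSpace ℝ (Fin d) => ‖y‖ ^ α)
      ((α * ‖x‖ ^ α / ‖x‖ ^ 2) • innerSL ℝ x) x := by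
    have h := hsq.rpow_const (p := α / 2) (Or.inl (by positivity))
    have hfun : (fun y : EuclideanSpace ℝ (Fin d) => ‖y‖ ^ α) =
        fun y => (‖y‖ ^ 2) ^ (α / 2) := by
      funext y
      rw [← Real.rpow_natCast, ← Real.rpow_mul (norm_nonneg _)]
      congr 1
      push_cast
      ring
    rw [hfun]
    convert! h using 1
    rw [Real.rpow_sub_one (by positivity), ← Real.rpow_natCast, ← Real.rpow_mul hr.le]
    ext v
    simp
    ring_nf
  have hg : ∀ v, fderiv ℝ (fun y => ‖y‖ ^ α • φ y) x v =
      ‖x‖ ^ α • fderiv ℝ φ x v + (α * ‖x‖ ^ α / ‖x‖ ^ 2 * inner ℝ x v) • φ x := by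
    intro v
    rw [(hpow.fun_smul hφ.hasFDerivAt).fderiv]
    simp
  have hh : fderiv ℝ (fun y => ‖φ y‖ ^ 2 / ‖y‖ ^ 2) x x =
      2 * inner ℝ (fderiv ℝ φ x x) (φ x) / ‖x‖ ^ 2 - 2 * (‖φ x‖ ^ 2 / ‖x‖ ^ 2) := by
    have hφsq : HasFDerivAt (fun y => ‖φ y‖ ^ 2) _ x := hφ.hasFDerivAt.norm_sq
    have hinv : HasFDerivAt (fun y : EuclideanSpace ℝ (Fin d) => (‖y‖ ^ 2)⁻¹) _ x :=
      (hasDerivAt_inv (pow_ne_zero 2 hr.ne')).comp_hasFDerivAt x hsq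
    simp_rw [div_eq_mul_inv]
    rw [(hφsq.fun_mul hinv).fderiv]
    simp [real_inner_comm]
    field_simp
    ring
  have hterm : ∀ j, ‖fderiv ℝ (fun y => ‖y‖ ^ α • φ y) x (EuclideanSpace.single j 1)
        - Complex.I * (A x j : ℝ) * (‖x‖ ^ α • φ x)‖ ^ 2 =
      (‖x‖ ^ α) ^ 2 * (‖fderiv ℝ φ x (EuclideanSpace.single j 1)
        - Complex.I * (A x j : ℝ) * φ x‖ ^ 2
        + 2 * α / ‖x‖ ^ 2 * inner ℝ (x j • fderiv ℝ φ x (EuclideanSpace.single j 1)) (φ x)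
        + α ^ 2 * ‖φ x‖ ^ 2 / ‖x‖ ^ 4 * x j ^ 2) := by
    intro j
    have hfac : fderiv ℝ (fun y => ‖y‖ ^ α • φ y) x (EuclideanSpace.single j 1)
        - Complex.I * (A x j : ℝ) * (‖x‖ ^ α • φ x) =
        ‖x‖ ^ α • ((fderiv ℝ φ x (EuclideanSpace.single j 1) - Complex.I * (A x j : ℝ) * φ x)
          + (α * x j / ‖x‖ ^ 2) • φ x) := by
      rw [hg]
      simp only [EuclideanSpace.inner_single_right, Complex.real_smul]
      simp
      ring
    have horth : inner ℝ (Complex.I * (A x j : ℝ) * φ x) (φ x) = 0 := by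
      simp [Complex.inner]
      ring
    rw [hfac, norm_smul, mul_pow, Real.norm_of_nonneg (by positivity), norm_add_sq_real,
      real_inner_smul_right, real_inner_smul_left, inner_sub_left, horth, norm_smul, mul_pow,
      Real.norm_eq_abs (_ / _), sq_abs]
    ring
  have hw : (‖x‖ ^ α) ^ 2 * ‖x‖ ^ (-(2 * α)) = 1 := by
    rw [← Real.rpow_natCast, ← Real.rpow_mul hr.le, ← Real.rpow_add hr]
    push_cast
    rw [show α * 2 + -(2 * α) = 0 by ring, Real.rpow_zero]
  have hnorm : ∑ j, x j ^ 2 = ‖x‖ ^ 2 := (EuclideanSpace.real_norm_sq_eq x).symm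
  rw [magEnergy, Finset.sum_congr rfl fun j _ => hterm j, ← Finset.mul_sum, mul_right_comm, hw,
    one_mul, Finset.sum_add_distrib, Finset.sum_add_distrib, ← Finset.mul_sum, ← Finset.mul_sum,
    hnorm, ← sum_inner, ← clm_apply_eq_sum, hh,
    show ∑ j, ‖fderiv ℝ φ x (EuclideanSpace.single j 1) - Complex.I * (A x j : ℝ) * φ x‖ ^ 2 =
      magEnergy d A φ x from rfl]
  field_simp
  ring

/-- The Hardy-type bound for functions vanishing near the origin. -/
lemma muB_mul_le_of_eventuallyEq_zero (hA : Continuous A) {R : ℝ}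
    {φ : EuclideanSpace ℝ (Fin d) → ℂ} (hφ : ContDiff ℝ (⊤ : ℕ∞) φ) (hc : HasCompactSupport φ)
    (h0 : φ =ᶠ[𝓝 0] 0) :
    muB d A R * ∫ x in Metric.ball (0 : EuclideanSpace ℝ (Fin d)) R, ‖φ x‖ ^ 2 ≤
      (∫ x, magEnergy d A φ x) - ((d - 2 : ℝ) / 2) ^ 2 * ∫ x, ‖φ x‖ ^ 2 / ‖x‖ ^ 2 := by
  set α : ℝ := (d - 2 : ℝ) / 2 with hα
  have hw : -((d : ℝ) - 2) = -(2 * α) := by rw [hα]; ring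
  set g : EuclideanSpace ℝ (Fin d) → ℂ := fun y => ‖y‖ ^ α • φ y with hgdef
  set h : EuclideanSpace ℝ (Fin d) → ℝ := fun y => ‖φ y‖ ^ 2 / ‖y‖ ^ 2 with hhdef
  have hg0 : g =ᶠ[𝓝 0] 0 := h0.mono fun y hy => by simp [hgdef, hy]
  have hh0 : h =ᶠ[𝓝 0] 0 := h0.mono fun y hy => by simp [hhdef, hy]
  have hg : ContDiff ℝ (⊤ : ℕ∞) g := contDiff_of_eventuallyEq_zero hg0 fun x hx =>
    ((contDiffAt_norm ℝ hx).rpow_const_of_ne (norm_ne_zero_iff.2 hx)).smul hφ.contDiffAt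
  have hh : ContDiff ℝ 1 h := contDiff_of_eventuallyEq_zero hh0 fun x hx =>
    ((hφ.of_le (by exact_mod_cast le_top)).norm_sq ℝ).contDiffAt.div (contDiff_norm_sq ℝ).contDiffAt
      (pow_ne_zero 2 (norm_ne_zero_iff.2 hx))
  have hhc : HasCompactSupport h := hc.mono fun x hx => by
    contrapose! hx
    simp_all
  have hrad : Integrable fun x => fderiv ℝ h x x :=
    ((hh.continuous_fderiv one_ne_zero).clm_apply continuous_id).integrable_of_hasCompactSupport
      ((hhc.fderiv ℝ).mono fun x hx => by contrapose! hx; simp_all)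
  have hhi : Integrable h := hh.continuous.integrable_of_hasCompactSupport hhc
  have hmag : Integrable (magEnergy d A φ) :=
    integrable_magEnergy hA (hφ.of_le (by exact_mod_cast le_top)) hc
  have hpt : ∀ x, magEnergy d A g x * ‖x‖ ^ (-(2 * α)) =
      magEnergy d A φ x + α * (fderiv ℝ h x x + 2 * h x) + α ^ 2 * h x := by
    intro x
    rcases eq_or_ne x 0 with rfl | hx
    · simp [magEnergy_eq_zero hg0, magEnergy_eq_zero h0, hh0.eq_of_nhds]
    · exact magEnergy_rpow_smul (hφ.differentiable (by simp) x) hx α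
  have hint : Integrable fun x => magEnergy d A g x * ‖x‖ ^ (-(2 * α)) := by
    simp_rw [hpt]
    fun_prop
  have htotal : ∫ x, magEnergy d A g x * ‖x‖ ^ (-(2 * α)) =
      (∫ x, magEnergy d A φ x) - α ^ 2 * ∫ x, h x := by
    simp_rw [hpt]
    rw [integral_add (by fun_prop) (by fun_prop), integral_add (by fun_prop) (by fun_prop),
      integral_const_mul, integral_const_mul, integral_add hrad (by fun_prop),
      integral_const_mul, integral_fderiv_self_apply hh hhc]
    rw [hα]
    ring
  have hden : ∀ᵐ x : EuclideanSpace ℝ (Fin d), ‖g x‖ ^ 2 * ‖x‖ ^ (-(2 * α)) = ‖φ x‖ ^ 2 := by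
    refine Eventually.of_forall fun x => ?_
    rcases eq_or_ne x 0 with rfl | hx
    · simp [hg0.eq_of_nhds, h0.eq_of_nhds]
    · have hr : 0 < ‖x‖ := norm_pos_iff.2 hx
      rw [hgdef, norm_smul, mul_pow, mul_right_comm, Real.norm_of_nonneg (by positivity),
        ← Real.rpow_natCast, ← Real.rpow_mul hr.le, ← Real.rpow_add hr]
      push_cast
      rw [show α * 2 + -(2 * α) = 0 by ring, Real.rpow_zero, one_mul]
  have hle := muB_mul_le (A := A) (R := R) hg
  rw [hw, integral_congr_ae (ae_restrict_of_ae hden)] at hle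
  rw [← htotal]
  exact hle.trans (setIntegral_le_integral hint (Eventually.of_forall fun x =>
    mul_nonneg (magEnergy_nonneg g x) (by positivity)))

/-- Smooth cutoffs vanishing near the origin, with a scale-invariant gradient bound. -/
lemma exists_cutoff (E : Type*) [NormedAddCommGroup E] [InnerProductSpace ℝ E]
    [FiniteDimensional ℝ E] :
    ∃ (C : ℝ) (χ : ℕ → E → ℝ), (∀ n, ContDiff ℝ (⊤ : ℕ∞) (χ n)) ∧ (∀ n, χ n =ᶠ[𝓝 0] 0) ∧
      (∀ n x, |χ n x| ≤ 1) ∧ (∀ n x, ‖x‖ * ‖fderiv ℝ (χ n) x‖ ≤ C) ∧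
      ∀ x ≠ 0, ∀ᶠ n in atTop, χ n =ᶠ[𝓝 x] 1 := by
  let f : ContDiffBump (0 : E) := ⟨1, 2, one_pos, one_lt_two⟩
  have hf : ContDiff ℝ (⊤ : ℕ∞) f := f.contDiff
  have hcont : Continuous fun y : E => ‖y‖ • fderiv ℝ f y :=
    continuous_norm.smul (hf.continuous_fderiv (by simp))
  have hcs : HasCompactSupport fun y : E => ‖y‖ • fderiv ℝ f y :=
    (f.hasCompactSupport.fderiv ℝ).smul_left (f := fun y : E => ‖y‖)
  obtain ⟨C, hC⟩ := hcs.exists_bound_of_continuous hcont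
  have hfderiv : ∀ (n : ℕ) (x : E), fderiv ℝ (fun y => 1 - f (((n : ℝ) + 1) • y)) x =
      -(((n : ℝ) + 1) • fderiv ℝ f (((n : ℝ) + 1) • x)) := by
    intro n x
    rw [fderiv_const_sub, fderiv_comp_smul]
  refine ⟨C, fun n x => 1 - f (((n : ℝ) + 1) • x), fun n => ?_, fun n => ?_, fun n x => ?_,
    fun n x => ?_, fun x hx => ?_⟩
  · exact contDiff_const.sub (hf.comp (contDiff_const_smul _))
  · have ht : Tendsto (fun y : E => ((n : ℝ) + 1) • y) (𝓝 0) (𝓝 0) := by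
      simpa using (continuous_const_smul ((n : ℝ) + 1)).tendsto (0 : E)
    filter_upwards [ht.eventually f.eventuallyEq_one] with y hy
    simp [hy]
  · have h1 : 0 ≤ f (((n : ℝ) + 1) • x) := f.nonneg
    have h2 : f (((n : ℝ) + 1) • x) ≤ 1 := f.le_one
    rw [abs_le]
    constructor <;> linarith
  · have h := hC (((n : ℝ) + 1) • x)
    rw [hfderiv, norm_neg, norm_smul]
    rw [norm_smul, norm_norm, norm_smul] at h
    linarith
  · have hr : 0 < ‖x‖ := norm_pos_iff.2 hx
    have hlim : Tendsto (fun n : ℕ => ((n : ℝ) + 1) * ‖x‖) atTop atTop :=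
      (tendsto_natCast_atTop_atTop.atTop_add tendsto_const_nhds).atTop_mul_const hr
    filter_upwards [hlim.eventually_gt_atTop 2] with n hn
    have hopen : ∀ᶠ y : E in 𝓝 x, 2 < ((n : ℝ) + 1) * ‖y‖ :=
      (continuous_const.mul continuous_norm).continuousAt.eventually (lt_mem_nhds hn)
    filter_upwards [hopen] with y hy
    have : f (((n : ℝ) + 1) • y) = 0 := f.zero_of_le_dist (by
      rw [dist_zero_right, norm_smul, Real.norm_of_nonneg (by positivity)]
      exact hy.le)
    simp [this]

lemma magEnergy_smul_le {χ : EuclideanSpace ℝ (Fin d) → ℝ} {ψ : EuclideanSpace ℝ (Fin d) → ℂ}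
    {x : EuclideanSpace ℝ (Fin d)} (hχ : DifferentiableAt ℝ χ x) (hψ : DifferentiableAt ℝ ψ x)
    (h1 : |χ x| ≤ 1) :
    magEnergy d A (fun y => χ y • ψ y) x ≤
      2 * magEnergy d A ψ x + 2 * d * (‖fderiv ℝ χ x‖ ^ 2 * ‖ψ x‖ ^ 2) := by
  have hterm : ∀ j : Fin d, ‖fderiv ℝ (fun y => χ y • ψ y) x (EuclideanSpace.single j 1)
        - Complex.I * (A x j : ℝ) * (χ x • ψ x)‖ ^ 2 ≤
      2 * ‖fderiv ℝ ψ x (EuclideanSpace.single j 1) - Complex.I * (A x j : ℝ) * ψ x‖ ^ 2 +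
        2 * (‖fderiv ℝ χ x‖ ^ 2 * ‖ψ x‖ ^ 2) := by
    intro j
    set a := fderiv ℝ ψ x (EuclideanSpace.single j 1) - Complex.I * (A x j : ℝ) * ψ x with ha
    have hsplit : fderiv ℝ (fun y => χ y • ψ y) x (EuclideanSpace.single j 1)
        - Complex.I * (A x j : ℝ) * (χ x • ψ x) =
        χ x • a + fderiv ℝ χ x (EuclideanSpace.single j 1) • ψ x := by
      rw [fderiv_fun_smul hχ hψ, ha]
      simp
      ring
    have hχa : ‖χ x • a‖ ≤ ‖a‖ := by
      rw [norm_smul]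
      exact mul_le_of_le_one_left (norm_nonneg _) h1
    have hdχ : ‖fderiv ℝ χ x (EuclideanSpace.single j 1) • ψ x‖ ≤ ‖fderiv ℝ χ x‖ * ‖ψ x‖ := by
      rw [norm_smul]
      gcongr
      simpa using (fderiv ℝ χ x).le_opNorm (EuclideanSpace.single j 1)
    rw [hsplit, ← mul_pow]
    calc ‖χ x • a + fderiv ℝ χ x (EuclideanSpace.single j 1) • ψ x‖ ^ 2
        ≤ (‖a‖ + ‖fderiv ℝ χ x‖ * ‖ψ x‖) ^ 2 := by
          gcongr
          exact (norm_add_le _ _).trans (add_le_add hχa hdχ)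
      _ ≤ 2 * ‖a‖ ^ 2 + 2 * (‖fderiv ℝ χ x‖ * ‖ψ x‖) ^ 2 := by
          linarith [add_sq_le (a := ‖a‖) (b := ‖fderiv ℝ χ x‖ * ‖ψ x‖)]
  refine (Finset.sum_le_sum fun j _ => hterm j).trans_eq ?_
  rw [Finset.sum_add_distrib, ← Finset.mul_sum, magEnergy]
  simp
  ring

/-- The Hardy-type bound in dimension at least three. -/
lemma muB_mul_le_of_three_le (hd : 3 ≤ d) (hA : Continuous A) {R : ℝ}
    {ψ : EuclideanSpace ℝ (Fin d) → ℂ} (hψ : ContDiff ℝ (⊤ : ℕ∞) ψ) (hc : HasCompactSupport ψ) :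
    muB d A R * ∫ x in Metric.ball (0 : EuclideanSpace ℝ (Fin d)) R, ‖ψ x‖ ^ 2 ≤
      (∫ x, magEnergy d A ψ x) - ((d - 2 : ℝ) / 2) ^ 2 * ∫ x, ‖ψ x‖ ^ 2 / ‖x‖ ^ 2 := by
  obtain ⟨C, χ, hχ, hχ0, hχ1, hχC, hχlim⟩ := exists_cutoff (EuclideanSpace ℝ (Fin d))
  have : Nonempty (Fin d) := ⟨⟨0, by omega⟩⟩
  have hle1 : (1 : WithTop ℕ∞) ≤ ((⊤ : ℕ∞) : WithTop ℕ∞) := by exact_mod_cast le_top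
  have hφ : ∀ n, ContDiff ℝ (⊤ : ℕ∞) fun y => χ n y • ψ y := fun n => (hχ n).smul hψ
  have hφc : ∀ n, HasCompactSupport fun y => χ n y • ψ y := fun n =>
    hc.smul_left (f := χ n)
  have hHardy := integrable_norm_sq_div_norm_sq hd hψ.continuous hc
  have hne : ∀ᵐ x : EuclideanSpace ℝ (Fin d), x ≠ 0 := by
    simp [ae_iff, measure_singleton]
  have hev : ∀ x ≠ 0, ∀ᶠ n in atTop, (fun y => χ n y • ψ y) =ᶠ[𝓝 x] ψ := fun x hx =>
    (hχlim x hx).mono fun n hn => hn.mono fun y hy => by simp [hy]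
  have hnorm : ∀ n x, ‖χ n x • ψ x‖ ≤ ‖ψ x‖ := fun n x => by
    rw [norm_smul]
    exact mul_le_of_le_one_left (norm_nonneg _) (hχ1 n x)
  have hlimE : Tendsto (fun n => ∫ x, magEnergy d A (fun y => χ n y • ψ y) x) atTop
      (𝓝 (∫ x, magEnergy d A ψ x)) := by
    refine tendsto_integral_of_dominated_convergence
      (fun x => 2 * magEnergy d A ψ x + 2 * d * (C ^ 2 * (‖ψ x‖ ^ 2 / ‖x‖ ^ 2)))
      (fun n => (continuous_magEnergy hA ((hφ n).of_le hle1)).aestronglyMeasurable)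
      (((integrable_magEnergy hA (hψ.of_le hle1) hc).const_mul _).add
        ((hHardy.const_mul _).const_mul _)) (fun n => ?_) ?_
    · filter_upwards [hne] with x hx
      have hr : 0 < ‖x‖ := norm_pos_iff.2 hx
      rw [Real.norm_of_nonneg (magEnergy_nonneg _ _)]
      refine (magEnergy_smul_le ((hχ n).differentiable (by simp) x)
        (hψ.differentiable (by simp) x) (hχ1 n x)).trans ?_
      have hgrad : ‖fderiv ℝ (χ n) x‖ ≤ C / ‖x‖ := by
        rw [le_div_iff₀ hr, mul_comm]
        exact hχC n x
      rw [show C ^ 2 * (‖ψ x‖ ^ 2 / ‖x‖ ^ 2) = (C / ‖x‖) ^ 2 * ‖ψ x‖ ^ 2 by ring]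
      gcongr
    · filter_upwards [hne] with x hx
      exact tendsto_const_nhds.congr' ((hev x hx).mono fun n hn => (magEnergy_congr hn).symm)
  have hlimH : Tendsto (fun n => ∫ x, ‖χ n x • ψ x‖ ^ 2 / ‖x‖ ^ 2) atTop
      (𝓝 (∫ x, ‖ψ x‖ ^ 2 / ‖x‖ ^ 2)) := by
    refine tendsto_integral_of_dominated_convergence (fun x => ‖ψ x‖ ^ 2 / ‖x‖ ^ 2)
      (fun n => (integrable_norm_sq_div_norm_sq hd (hφ n).continuous (hφc n)).1) hHardy
      (fun n => Eventually.of_forall fun x => ?_) ?_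
    · rw [Real.norm_of_nonneg (by positivity)]
      gcongr
      exact hnorm n x
    · filter_upwards [hne] with x hx
      exact tendsto_const_nhds.congr' ((hev x hx).mono fun n hn => by simp only [hn.eq_of_nhds])
  have hlimB : Tendsto (fun n => ∫ x in Metric.ball (0 : EuclideanSpace ℝ (Fin d)) R,
      ‖χ n x • ψ x‖ ^ 2) atTop
      (𝓝 (∫ x in Metric.ball (0 : EuclideanSpace ℝ (Fin d)) R, ‖ψ x‖ ^ 2)) := by
    have hψint : Integrable fun x => ‖ψ x‖ ^ 2 :=
      (hψ.continuous.norm.pow 2).integrable_of_hasCompactSupport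
        (hasCompactSupport_norm_sq hc)
    refine tendsto_integral_of_dominated_convergence (fun x => ‖ψ x‖ ^ 2)
      (fun n => ((hφ n).continuous.norm.pow 2).aestronglyMeasurable) hψint.restrict
      (fun n => Eventually.of_forall fun x => ?_) ?_
    · rw [Real.norm_of_nonneg (by positivity)]
      gcongr
      exact hnorm n x
    · filter_upwards [ae_restrict_of_ae hne] with x hx
      exact tendsto_const_nhds.congr' ((hev x hx).mono fun n hn => by simp only [hn.eq_of_nhds])
  exact le_of_tendsto_of_tendsto' (hlimB.const_mul _) (hlimE.sub (hlimH.const_mul _)) fun n =>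
    muB_mul_le_of_eventuallyEq_zero hA (hφ n) (hφc n)
      ((hχ0 n).mono fun y hy => by simp [hy])

theorem stmt10 (d : ℕ) (hd : 2 ≤ d)
    (A : EuclideanSpace ℝ (Fin d) → EuclideanSpace ℝ (Fin d)) (hA : ContDiff ℝ (⊤ : ℕ∞) A)
    (R : ℝ) (hR : 0 < R)
    (ψ : EuclideanSpace ℝ (Fin d) → ℂ) (hψ : ContDiff ℝ (⊤ : ℕ∞) ψ) (hsupp : HasCompactSupport ψ) :
    (∫ x, magEnergy d A ψ x) - ((d - 2 : ℝ)/2)^2 * (∫ x, ‖ψ x‖^2 / ‖x‖^2)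
    ≥ muB d A R * ∫ x in Metric.ball (0 : EuclideanSpace ℝ (Fin d)) R, ‖ψ x‖^2 := by
  rcases hd.eq_or_lt with rfl | h3
  · have hle := muB_mul_le (A := A) (R := R) hψ
    have hint := integrable_magEnergy hA.continuous
      (hψ.of_le (by exact_mod_cast le_top)) hsupp
    simp only [Nat.cast_ofNat, sub_self, neg_zero, Real.rpow_zero, mul_one] at hle
    simpa using hle.trans (setIntegral_le_integral hint
      (Eventually.of_forall fun x => magEnergy_nonneg ψ x))
  · exact muB_mul_le_of_three_le h3 hA.continuous hψ hsupp
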